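/- arXiv:0804.1077 — 6 statements merged into one kernel-verified Lean document; each statement's English description precedes it below -/
import Mathlib

section
/- In H(1,K,K̄,L,L̄) the following products vanish: K L = 0, K L̄ = 0, K̄ L = 0, K̄ L̄ = 0; consequently P Q = 0. -/
/-!
Multiplying `K K̄ + L L̄ = 1` by `K` and using `K K̄ K = K` gives `K (L L̄) = 0`; hence
`K L = K (L L̄) L = 0`. This is `mul_eq_zero_of_regular`. The relations are symmetric under
`K ↔ K̄` and under `L ↔ L̄`, which gives the other three products, and `P Q = (K̄ L̄) (K L) = 0`.
-/

noncomputable section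

open MvPolynomial

/-- The ideal of relations of `H(1,K,K̄,L,L̄)` inside `ℂ[K,K̄,L,L̄]`,
variables: `0 ↦ K`, `1 ↦ K̄`, `2 ↦ L`, `3 ↦ L̄`. -/
def relH : Ideal (MvPolynomial (Fin 4) ℂ) := Ideal.span
  {X 0 * X 1 * X 0 - X 0, X 1 * X 0 * X 1 - X 1,
   X 2 * X 3 * X 2 - X 2, X 3 * X 2 * X 3 - X 3,
   X 0 * X 1 + X 2 * X 3 - 1}

/-- The commutative unital algebra `H(1,K,K̄,L,L̄)`. -/
abbrev Halg : Type := MvPolynomial (Fin 4) ℂ ⧸ relH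

def hK : Halg := Ideal.Quotient.mk relH (X 0)
def hKb : Halg := Ideal.Quotient.mk relH (X 1)
def hL : Halg := Ideal.Quotient.mk relH (X 2)
def hLb : Halg := Ideal.Quotient.mk relH (X 3)
def hP : Halg := hK * hKb
def hQ : Halg := hL * hLb


/-- If `a * b * a = a`, `c * d * c = c` and `a * b + c * d = 1`, then `a * (c * d) = 0`, so
`a * c = a * (c * d) * c = 0`. -/
theorem mul_eq_zero_of_regular {R : Type*} [CommRing R] {a b c d : R}
    (ha : a * b * a = a) (hc : c * d * c = c) (h : a * b + c * d = 1) : a * c = 0 := by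
  linear_combination (-a) * hc - c * ha + a * c * h

/-- The five defining relations, read in the quotient. -/
theorem hRelations : hK * hKb * hK = hK ∧ hKb * hK * hKb = hKb ∧
    hL * hLb * hL = hL ∧ hLb * hL * hLb = hLb ∧ hK * hKb + hL * hLb = 1 := by
  refine ⟨?_, ?_, ?_, ?_, ?_⟩ <;>
  · simp only [hK, hKb, hL, hLb]
    rw [← sub_eq_zero]
    simp only [← map_mul, ← map_add, ← map_sub, ← map_one (Ideal.Quotient.mk relH)]
    exact Ideal.Quotient.eq_zero_iff_mem.mpr (Ideal.subset_span (by simp))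

/-- In `H(1,K,K̄,L,L̄)` one has `KL = KL̄ = K̄L = K̄L̄ = 0`; consequently `PQ = 0`. -/
theorem statement1 :
    hK * hL = 0 ∧ hK * hLb = 0 ∧ hKb * hL = 0 ∧ hKb * hLb = 0 ∧ hP * hQ = 0 := by
  obtain ⟨h1, h2, h3, h4, h5⟩ := hRelations
  have hKL : hK * hL = 0 := mul_eq_zero_of_regular h1 h3 h5
  refine ⟨hKL, mul_eq_zero_of_regular h1 h4 (by rw [mul_comm hLb]; exact h5),
    mul_eq_zero_of_regular h2 h3 (by rw [mul_comm hKb]; exact h5),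
    mul_eq_zero_of_regular h2 h4 (by rw [mul_comm hKb, mul_comm hLb]; exact h5), ?_⟩
  unfold hP hQ
  linear_combination hKb * hLb * hKL
end
end

section
/- For any nonzero a, b ∈ ℂ, the ℂ-algebra homomorphism Φ from the Laurent polynomial algebra ℂ[k,k⁻¹] to H(1,K,K̄,L,L̄) determined by Φ(k) = aK + bL and Φ(k⁻¹) = a⁻¹K̄ + b⁻¹L̄ (well defined because (aK + bL)(a⁻¹K̄ + b⁻¹L̄) = 1) is injective. -/
/-!
The relations make `P = K K̄` and `Q = L L̄` complementary idempotents, hence `P Q = 0` and the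
cross terms `K L̄ = K (P Q) L̄` and `L K̄` vanish. So `a K + b L` is a unit with inverse
`a⁻¹ K̄ + b⁻¹ L̄`, and `Φ` exists by the universal property of Laurent polynomials.

For injectivity, the corner `P = 1`, `Q = 0` already suffices: `K ↦ a⁻¹ T`, `K̄ ↦ a T⁻¹`,
`L, L̄ ↦ 0` respects the relations and gives an algebra homomorphism `H → ℂ[T, T⁻¹]`
(`exists_retraction`) that is a left inverse of `Φ`.
-/

noncomputable section

open MvPolynomial

theorem hK_rel : hK * hKb * hK = hK := by
  refine Ideal.Quotient.eq.mpr (Ideal.subset_span ?_)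
  simp

theorem hKb_rel : hKb * hK * hKb = hKb := by
  refine Ideal.Quotient.eq.mpr (Ideal.subset_span ?_)
  simp

theorem hL_rel : hL * hLb * hL = hL := by
  refine Ideal.Quotient.eq.mpr (Ideal.subset_span ?_)
  simp

theorem hLb_rel : hLb * hL * hLb = hLb := by
  refine Ideal.Quotient.eq.mpr (Ideal.subset_span ?_)
  simp

theorem hPQ_rel : hK * hKb + hL * hLb = 1 := by
  refine Ideal.Quotient.eq.mpr (Ideal.subset_span ?_)
  simp

theorem hK_mul_hLb : hK * hLb = 0 := by
  linear_combination hK * hLb * hPQ_rel - hLb * hK_rel - hK * hLb_rel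

theorem hL_mul_hKb : hL * hKb = 0 := by
  linear_combination hL * hKb * hPQ_rel - hKb * hL_rel - hL * hKb_rel

theorem unit_rel (a b : ℂ) (ha : a ≠ 0) (hb : b ≠ 0) :
    (a • hK + b • hL) * (a⁻¹ • hKb + b⁻¹ • hLb) = 1 := by
  simp only [add_mul, mul_add, smul_mul_smul_comm, mul_inv_cancel₀ ha, mul_inv_cancel₀ hb,
    hK_mul_hLb, hL_mul_hKb, smul_zero, one_smul, add_zero, zero_add]
  exact hPQ_rel

open LaurentPolynomial in
/-- The projection of `H` onto the corner where `Q = 0`, with `K` rescaled by `a⁻¹`. -/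
theorem exists_retraction (a : ℂ) (ha : a ≠ 0) :
    ∃ ψ : Halg →ₐ[ℂ] LaurentPolynomial ℂ,
      ψ hK = a⁻¹ • T 1 ∧ ψ hKb = a • T (-1) ∧ ψ hL = 0 ∧ ψ hLb = 0 := by
  let f : MvPolynomial (Fin 4) ℂ →ₐ[ℂ] LaurentPolynomial ℂ :=
    aeval ![a⁻¹ • T 1, a • T (-1), 0, 0]
  have hTT : (a⁻¹ • T 1 : LaurentPolynomial ℂ) * (a • T (-1)) = 1 := by
    rw [smul_mul_smul_comm, inv_mul_cancel₀ ha, ← T_add]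
    simp
  have h0 : f (X 0) = a⁻¹ • T 1 := by simp [f]
  have h1 : f (X 1) = a • T (-1) := by simp [f]
  have h2 : f (X 2) = 0 := by simp [f]
  have h3 : f (X 3) = 0 := by simp [f]
  have hf : relH ≤ RingHom.ker f := by
    refine Ideal.span_le.mpr ?_
    rintro p (rfl | rfl | rfl | rfl | rfl) <;>
      simp only [SetLike.mem_coe, RingHom.mem_ker, map_sub, map_mul, map_add, map_one,
        h0, h1, h2, h3]
    · linear_combination (a⁻¹ • T 1 : LaurentPolynomial ℂ) * hTT
    · linear_combination (a • T (-1) : LaurentPolynomial ℂ) * hTT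
    · ring
    · ring
    · linear_combination hTT
  exact ⟨Ideal.Quotient.liftₐ relH f fun p hp => hf hp, h0, h1, h2, h3⟩

open LaurentPolynomial in
/-- An algebra endomorphism of `ℂ[T, T⁻¹]` that fixes `T` and `T⁻¹` is the identity. -/
theorem laurent_endo_eq_self (g : LaurentPolynomial ℂ →ₐ[ℂ] LaurentPolynomial ℂ)
    (h1 : g (T 1) = T 1) (h2 : g (T (-1)) = T (-1)) (p : LaurentPolynomial ℂ) : g p = p := by
  have hC (c : ℂ) : g (LaurentPolynomial.C c) = LaurentPolynomial.C c := g.commutes c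
  induction p using LaurentPolynomial.induction_on with
  | h_C c => exact hC c
  | h_add hp hq => rw [map_add, hp, hq]
  | h_C_mul_T n c ih => rw [T_add, ← mul_assoc, map_mul, ih, h1]
  | h_C_mul_T_Z n c ih => rw [sub_eq_add_neg, T_add, ← mul_assoc, map_mul, ih, h2]

open LaurentPolynomial in
/-- For nonzero `a, b ∈ ℂ`, the algebra homomorphism `Φ : ℂ[k,k⁻¹] → H(1,K,K̄,L,L̄)`
determined by `Φ(k) = aK + bL`, `Φ(k⁻¹) = a⁻¹K̄ + b⁻¹L̄` exists and is injective. -/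
theorem statement2 (a b : ℂ) (ha : a ≠ 0) (hb : b ≠ 0) :
    (∃ Φ : LaurentPolynomial ℂ →ₐ[ℂ] Halg,
      Φ (T 1) = a • hK + b • hL ∧ Φ (T (-1)) = a⁻¹ • hKb + b⁻¹ • hLb) ∧
    ∀ Φ : LaurentPolynomial ℂ →ₐ[ℂ] Halg,
      Φ (T 1) = a • hK + b • hL → Φ (T (-1)) = a⁻¹ • hKb + b⁻¹ • hLb →
      Function.Injective Φ := by
  constructor
  · let u : Halgˣ := Units.mkOfMulEqOne _ _ (unit_rel a b ha hb)
    let Φ : LaurentPolynomial ℂ →ₐ[ℂ] Halg :=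
      { eval₂ (algebraMap ℂ Halg) u with
        commutes' := fun r => eval₂_C (algebraMap ℂ Halg) u r }
    refine ⟨Φ, ?_, ?_⟩
    · exact (eval₂_T (algebraMap ℂ Halg) u 1).trans (by rw [zpow_one]; rfl)
    · exact (eval₂_T (algebraMap ℂ Halg) u (-1)).trans (by rw [zpow_neg_one]; rfl)
  · intro Φ h1 h2
    obtain ⟨ψ, hψK, hψKb, hψL, hψLb⟩ := exists_retraction a ha
    have hid := laurent_endo_eq_self (ψ.comp Φ)
      (by simp [h1, hψK, hψL, smul_smul, ha]) (by simp [h2, hψKb, hψLb, smul_smul, ha])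
    exact Function.LeftInverse.injective hid
end
end

section
/- For any nonzero a, b ∈ ℂ, the assignment K ↦ aK, K̄ ↦ a⁻¹K̄, L ↦ bL, L̄ ↦ b⁻¹L̄, E ↦ E, F ↦ F extends to a ℂ-algebra isomorphism Ψ : U^{22}_{K+L} → U^{22}_{aK+bL}, and the same assignment extends to a ℂ-algebra isomorphism U^{31}_{K+L} → U^{31}_{aK+bL}. -/
/-!
The rescaling `K ↦ sK`, `K̄ ↦ s⁻¹K̄`, `L ↦ tL`, `L̄ ↦ t⁻¹L̄`, `E ↦ E`, `F ↦ F` is an endomorphism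
`rescale s t` of the free algebra. For nonzero `s, t` it multiplies both sides of each von Neumann
regularity relation by a common scalar, fixes `K K̄`, `L L̄` and their commuted versions, and sends
the Cartan-like elements `cK c d`, `cKb c d` to `cK (c * s) (d * t)`, `cKb (c * s) (d * t)`. Hence
the relations with parameters `(c, d)` go to consequences of those with parameters
`(c * s, d * t)` (`rescale_rel22`, `rescale_rel31`). As `rescale s t` and `rescale s⁻¹ t⁻¹` are
mutually inverse, the maps induced on the quotients for `(1, 1) → (a, b)` and `(a, b) → (1, 1)`
are mutually inverse isomorphisms (`exists_equiv_of_rescale`).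
-/

noncomputable section

inductive G6 : Type | K | Kb | L | Lb | E | F

abbrev FA6 : Type := FreeAlgebra ℂ G6

def XK : FA6 := FreeAlgebra.ι ℂ G6.K
def XKb : FA6 := FreeAlgebra.ι ℂ G6.Kb
def XL : FA6 := FreeAlgebra.ι ℂ G6.L
def XLb : FA6 := FreeAlgebra.ι ℂ G6.Lb
def XE : FA6 := FreeAlgebra.ι ℂ G6.E
def XF : FA6 := FreeAlgebra.ι ℂ G6.F

/-- The "Cartan-like" element `aK + bL`. -/
def cK (a b : ℂ) : FA6 := a • XK + b • XL
/-- The "Cartan-like" element `a⁻¹K̄ + b⁻¹L̄`. -/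
def cKb (a b : ℂ) : FA6 := a⁻¹ • XKb + b⁻¹ • XLb

/-- Relations of `U^{22}_{aK+bL}`. -/
inductive rel22 (q a b : ℂ) : FA6 → FA6 → Prop
  | kkk : rel22 q a b (XK * XKb * XK) XK
  | kbk : rel22 q a b (XKb * XK * XKb) XKb
  | kc : rel22 q a b (XK * XKb) (XKb * XK)
  | lll : rel22 q a b (XL * XLb * XL) XL
  | lbl : rel22 q a b (XLb * XL * XLb) XLb
  | lc : rel22 q a b (XL * XLb) (XLb * XL)
  | pq : rel22 q a b (XK * XKb + XL * XLb) 1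
  | ke : rel22 q a b (cK a b * XE) (q ^ 2 • (XE * cK a b))
  | kbe : rel22 q a b (cKb a b * XE) ((q ^ 2)⁻¹ • (XE * cKb a b))
  | kf : rel22 q a b (cK a b * XF) ((q ^ 2)⁻¹ • (XF * cK a b))
  | kbf : rel22 q a b (cKb a b * XF) (q ^ 2 • (XF * cKb a b))
  | ef : rel22 q a b (XE * XF - XF * XE)
      ((q - q⁻¹)⁻¹ • (cK a b - cKb a b))

/-- Relations of `U^{31}_{aK+bL}`. -/
inductive rel31 (q a b : ℂ) : FA6 → FA6 → Prop
  | kkk : rel31 q a b (XK * XKb * XK) XK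
  | kbk : rel31 q a b (XKb * XK * XKb) XKb
  | kc : rel31 q a b (XK * XKb) (XKb * XK)
  | lll : rel31 q a b (XL * XLb * XL) XL
  | lbl : rel31 q a b (XLb * XL * XLb) XLb
  | lc : rel31 q a b (XL * XLb) (XLb * XL)
  | pq : rel31 q a b (XK * XKb + XL * XLb) 1
  | ke : rel31 q a b (cK a b * XE * cKb a b) (q ^ 2 • XE)
  | kbe : rel31 q a b (cKb a b * XE * cK a b) ((q ^ 2)⁻¹ • XE)
  | kf : rel31 q a b (cK a b * XF * cKb a b) ((q ^ 2)⁻¹ • XF)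
  | kbf : rel31 q a b (cKb a b * XF * cK a b) (q ^ 2 • XF)
  | ef : rel31 q a b (XE * XF - XF * XE)
      ((q - q⁻¹)⁻¹ • (cK a b - cKb a b))

abbrev U22 (q a b : ℂ) : Type := RingQuot (rel22 q a b)
abbrev U31 (q a b : ℂ) : Type := RingQuot (rel31 q a b)

/-- The endomorphism of the free algebra given by `K ↦ sK`, `K̄ ↦ s⁻¹K̄`, `L ↦ tL`, `L̄ ↦ t⁻¹L̄`,
`E ↦ E`, `F ↦ F`. -/
def rescale (s t : ℂ) : FA6 →ₐ[ℂ] FA6 :=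
  FreeAlgebra.lift ℂ fun
    | G6.K => s • XK
    | G6.Kb => s⁻¹ • XKb
    | G6.L => t • XL
    | G6.Lb => t⁻¹ • XLb
    | G6.E => XE
    | G6.F => XF

section rescale
variable (s t : ℂ)

lemma rescale_XK : rescale s t XK = s • XK := by simp [rescale, XK]
lemma rescale_XKb : rescale s t XKb = s⁻¹ • XKb := by simp [rescale, XKb]
lemma rescale_XL : rescale s t XL = t • XL := by simp [rescale, XL]
lemma rescale_XLb : rescale s t XLb = t⁻¹ • XLb := by simp [rescale, XLb]
lemma rescale_XE : rescale s t XE = XE := by simp [rescale, XE]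
lemma rescale_XF : rescale s t XF = XF := by simp [rescale, XF]

lemma rescale_cK (c d : ℂ) : rescale s t (cK c d) = cK (c * s) (d * t) := by
  simp [cK, rescale_XK, rescale_XL, smul_smul]

lemma rescale_cKb (c d : ℂ) : rescale s t (cKb c d) = cKb (c * s) (d * t) := by
  simp [cKb, rescale_XKb, rescale_XLb, smul_smul, mul_comm]

end rescale

lemma rescale_comp_rescale {s t s' t' : ℂ} (hs : s' * s = 1) (ht : t' * t = 1) :
    (rescale s t).comp (rescale s' t') = AlgHom.id ℂ FA6 := by
  have hs' : s'⁻¹ * s⁻¹ = 1 := by rw [← mul_inv, hs, inv_one]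
  have ht' : t'⁻¹ * t⁻¹ = 1 := by rw [← mul_inv, ht, inv_one]
  ext g
  cases g
  · change rescale s t (rescale s' t' XK) = XK
    rw [rescale_XK, map_smul, rescale_XK, smul_smul, hs, one_smul]
  · change rescale s t (rescale s' t' XKb) = XKb
    rw [rescale_XKb, map_smul, rescale_XKb, smul_smul, hs', one_smul]
  · change rescale s t (rescale s' t' XL) = XL
    rw [rescale_XL, map_smul, rescale_XL, smul_smul, ht, one_smul]
  · change rescale s t (rescale s' t' XLb) = XLb
    rw [rescale_XLb, map_smul, rescale_XLb, smul_smul, ht', one_smul]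
  · change rescale s t (rescale s' t' XE) = XE
    rw [rescale_XE, rescale_XE]
  · change rescale s t (rescale s' t' XF) = XF
    rw [rescale_XF, rescale_XF]

lemma rescale_rel22 (q c d : ℂ) {s t : ℂ} (hs : s ≠ 0) (ht : t ≠ 0) {x y : FA6}
    (h : rel22 q c d x y) :
    RingQuot.mkAlgHom ℂ (rel22 q (c * s) (d * t)) (rescale s t x) =
      RingQuot.mkAlgHom ℂ (rel22 q (c * s) (d * t)) (rescale s t y) := by
  have key {x y : FA6} (h : rel22 q (c * s) (d * t) x y) := RingQuot.mkAlgHom_rel ℂ h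
  cases h with
  | kkk =>
    simpa [rescale_XK, rescale_XKb, smul_smul, hs, ht] using
      congrArg (s • ·) (key .kkk)
  | kbk =>
    simpa [rescale_XK, rescale_XKb, smul_smul, hs, ht] using
      congrArg (s⁻¹ • ·) (key .kbk)
  | kc => simpa [rescale_XK, rescale_XKb, smul_smul, hs, ht] using key .kc
  | lll =>
    simpa [rescale_XL, rescale_XLb, smul_smul, hs, ht] using
      congrArg (t • ·) (key .lll)
  | lbl =>
    simpa [rescale_XL, rescale_XLb, smul_smul, hs, ht] using
      congrArg (t⁻¹ • ·) (key .lbl)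
  | lc => simpa [rescale_XL, rescale_XLb, smul_smul, hs, ht] using key .lc
  | pq => simpa [rescale_XK, rescale_XKb, rescale_XL, rescale_XLb, smul_smul, hs, ht] using key .pq
  | ke => simpa only [map_mul, map_smul, map_sub, rescale_cK, rescale_cKb, rescale_XE, rescale_XF]
      using key .ke
  | kbe => simpa only [map_mul, map_smul, map_sub, rescale_cK, rescale_cKb, rescale_XE, rescale_XF]
      using key .kbe
  | kf => simpa only [map_mul, map_smul, map_sub, rescale_cK, rescale_cKb, rescale_XE, rescale_XF]
      using key .kf
  | kbf => simpa only [map_mul, map_smul, map_sub, rescale_cK, rescale_cKb, rescale_XE, rescale_XF]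
      using key .kbf
  | ef => simpa only [map_mul, map_smul, map_sub, rescale_cK, rescale_cKb, rescale_XE, rescale_XF]
      using key .ef

lemma rescale_rel31 (q c d : ℂ) {s t : ℂ} (hs : s ≠ 0) (ht : t ≠ 0) {x y : FA6}
    (h : rel31 q c d x y) :
    RingQuot.mkAlgHom ℂ (rel31 q (c * s) (d * t)) (rescale s t x) =
      RingQuot.mkAlgHom ℂ (rel31 q (c * s) (d * t)) (rescale s t y) := by
  have key {x y : FA6} (h : rel31 q (c * s) (d * t) x y) := RingQuot.mkAlgHom_rel ℂ h
  cases h with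
  | kkk =>
    simpa [rescale_XK, rescale_XKb, smul_smul, hs, ht] using
      congrArg (s • ·) (key .kkk)
  | kbk =>
    simpa [rescale_XK, rescale_XKb, smul_smul, hs, ht] using
      congrArg (s⁻¹ • ·) (key .kbk)
  | kc => simpa [rescale_XK, rescale_XKb, smul_smul, hs, ht] using key .kc
  | lll =>
    simpa [rescale_XL, rescale_XLb, smul_smul, hs, ht] using
      congrArg (t • ·) (key .lll)
  | lbl =>
    simpa [rescale_XL, rescale_XLb, smul_smul, hs, ht] using
      congrArg (t⁻¹ • ·) (key .lbl)
  | lc => simpa [rescale_XL, rescale_XLb, smul_smul, hs, ht] using key .lc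
  | pq => simpa [rescale_XK, rescale_XKb, rescale_XL, rescale_XLb, smul_smul, hs, ht] using key .pq
  | ke => simpa only [map_mul, map_smul, map_sub, rescale_cK, rescale_cKb, rescale_XE, rescale_XF]
      using key .ke
  | kbe => simpa only [map_mul, map_smul, map_sub, rescale_cK, rescale_cKb, rescale_XE, rescale_XF]
      using key .kbe
  | kf => simpa only [map_mul, map_smul, map_sub, rescale_cK, rescale_cKb, rescale_XE, rescale_XF]
      using key .kf
  | kbf => simpa only [map_mul, map_smul, map_sub, rescale_cK, rescale_cKb, rescale_XE, rescale_XF]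
      using key .kbf
  | ef => simpa only [map_mul, map_smul, map_sub, rescale_cK, rescale_cKb, rescale_XE, rescale_XF]
      using key .ef

/-- If `rescale s t` carries the relations `r` to consequences of `r'`, and the inverse rescaling
carries `r'` to consequences of `r`, then it descends to an isomorphism of the quotients. -/
lemma exists_equiv_of_rescale {r r' : FA6 → FA6 → Prop} {s t : ℂ} (hs : s ≠ 0) (ht : t ≠ 0)
    (h : ∀ ⦃x y⦄, r x y →
      RingQuot.mkAlgHom ℂ r' (rescale s t x) = RingQuot.mkAlgHom ℂ r' (rescale s t y))
    (h' : ∀ ⦃x y⦄, r' x y →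
      RingQuot.mkAlgHom ℂ r (rescale s⁻¹ t⁻¹ x) = RingQuot.mkAlgHom ℂ r (rescale s⁻¹ t⁻¹ y)) :
    ∃ Ψ : RingQuot r ≃ₐ[ℂ] RingQuot r',
      Ψ (RingQuot.mkAlgHom ℂ r XK) = s • RingQuot.mkAlgHom ℂ r' XK ∧
      Ψ (RingQuot.mkAlgHom ℂ r XKb) = s⁻¹ • RingQuot.mkAlgHom ℂ r' XKb ∧
      Ψ (RingQuot.mkAlgHom ℂ r XL) = t • RingQuot.mkAlgHom ℂ r' XL ∧
      Ψ (RingQuot.mkAlgHom ℂ r XLb) = t⁻¹ • RingQuot.mkAlgHom ℂ r' XLb ∧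
      Ψ (RingQuot.mkAlgHom ℂ r XE) = RingQuot.mkAlgHom ℂ r' XE ∧
      Ψ (RingQuot.mkAlgHom ℂ r XF) = RingQuot.mkAlgHom ℂ r' XF := by
  let f : RingQuot r →ₐ[ℂ] RingQuot r' :=
    RingQuot.liftAlgHom ℂ ⟨(RingQuot.mkAlgHom ℂ r').comp (rescale s t), h⟩
  let g : RingQuot r' →ₐ[ℂ] RingQuot r :=
    RingQuot.liftAlgHom ℂ ⟨(RingQuot.mkAlgHom ℂ r).comp (rescale s⁻¹ t⁻¹), h'⟩
  have hf (x : FA6) : f (RingQuot.mkAlgHom ℂ r x) = RingQuot.mkAlgHom ℂ r' (rescale s t x) :=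
    RingQuot.liftAlgHom_mkAlgHom_apply ..
  have hg (x : FA6) :
      g (RingQuot.mkAlgHom ℂ r' x) = RingQuot.mkAlgHom ℂ r (rescale s⁻¹ t⁻¹ x) :=
    RingQuot.liftAlgHom_mkAlgHom_apply ..
  have hfg : f.comp g = AlgHom.id ℂ _ := by
    refine RingQuot.ringQuot_ext' ℂ _ _ (AlgHom.ext fun x => ?_)
    change f (g (RingQuot.mkAlgHom ℂ r' x)) = RingQuot.mkAlgHom ℂ r' x
    rw [hg, hf]
    exact congrArg _ <| DFunLike.congr_fun
      (rescale_comp_rescale (inv_mul_cancel₀ hs) (inv_mul_cancel₀ ht)) x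
  have hgf : g.comp f = AlgHom.id ℂ _ := by
    refine RingQuot.ringQuot_ext' ℂ _ _ (AlgHom.ext fun x => ?_)
    change g (f (RingQuot.mkAlgHom ℂ r x)) = RingQuot.mkAlgHom ℂ r x
    rw [hf, hg]
    exact congrArg _ <| DFunLike.congr_fun
      (rescale_comp_rescale (mul_inv_cancel₀ hs) (mul_inv_cancel₀ ht)) x
  refine ⟨AlgEquiv.ofAlgHom f g hfg hgf, ?_, ?_, ?_, ?_, ?_, ?_⟩ <;>
    rw [AlgEquiv.ofAlgHom_apply, hf]
  · rw [rescale_XK, map_smul]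
  · rw [rescale_XKb, map_smul]
  · rw [rescale_XL, map_smul]
  · rw [rescale_XLb, map_smul]
  · rw [rescale_XE]
  · rw [rescale_XF]

/-- For nonzero `a, b`, the assignment `K ↦ aK`, `K̄ ↦ a⁻¹K̄`, `L ↦ bL`, `L̄ ↦ b⁻¹L̄`,
`E ↦ E`, `F ↦ F` extends to algebra isomorphisms
`U^{22}_{K+L} ≃ U^{22}_{aK+bL}` and `U^{31}_{K+L} ≃ U^{31}_{aK+bL}`. -/
theorem statement3 (q a b : ℂ) (hq0 : q ≠ 0) (hq1 : q ≠ 1) (hqm1 : q ≠ -1)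
    (ha : a ≠ 0) (hb : b ≠ 0) :
    (∃ Ψ : U22 q 1 1 ≃ₐ[ℂ] U22 q a b,
      Ψ (RingQuot.mkAlgHom ℂ (rel22 q 1 1) XK) = a • RingQuot.mkAlgHom ℂ (rel22 q a b) XK ∧
      Ψ (RingQuot.mkAlgHom ℂ (rel22 q 1 1) XKb) = a⁻¹ • RingQuot.mkAlgHom ℂ (rel22 q a b) XKb ∧
      Ψ (RingQuot.mkAlgHom ℂ (rel22 q 1 1) XL) = b • RingQuot.mkAlgHom ℂ (rel22 q a b) XL ∧
      Ψ (RingQuot.mkAlgHom ℂ (rel22 q 1 1) XLb) = b⁻¹ • RingQuot.mkAlgHom ℂ (rel22 q a b) XLb ∧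
      Ψ (RingQuot.mkAlgHom ℂ (rel22 q 1 1) XE) = RingQuot.mkAlgHom ℂ (rel22 q a b) XE ∧
      Ψ (RingQuot.mkAlgHom ℂ (rel22 q 1 1) XF) = RingQuot.mkAlgHom ℂ (rel22 q a b) XF) ∧
    (∃ Ψ : U31 q 1 1 ≃ₐ[ℂ] U31 q a b,
      Ψ (RingQuot.mkAlgHom ℂ (rel31 q 1 1) XK) = a • RingQuot.mkAlgHom ℂ (rel31 q a b) XK ∧
      Ψ (RingQuot.mkAlgHom ℂ (rel31 q 1 1) XKb) = a⁻¹ • RingQuot.mkAlgHom ℂ (rel31 q a b) XKb ∧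
      Ψ (RingQuot.mkAlgHom ℂ (rel31 q 1 1) XL) = b • RingQuot.mkAlgHom ℂ (rel31 q a b) XL ∧
      Ψ (RingQuot.mkAlgHom ℂ (rel31 q 1 1) XLb) = b⁻¹ • RingQuot.mkAlgHom ℂ (rel31 q a b) XLb ∧
      Ψ (RingQuot.mkAlgHom ℂ (rel31 q 1 1) XE) = RingQuot.mkAlgHom ℂ (rel31 q a b) XE ∧
      Ψ (RingQuot.mkAlgHom ℂ (rel31 q 1 1) XF) = RingQuot.mkAlgHom ℂ (rel31 q a b) XF) := by
  refine ⟨exists_equiv_of_rescale ha hb (fun x y h => ?_) (fun x y h => ?_),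
    exists_equiv_of_rescale ha hb (fun x y h => ?_) (fun x y h => ?_)⟩
  · have h₁ := rescale_rel22 q 1 1 ha hb h
    rwa [one_mul, one_mul] at h₁
  · have h₁ := rescale_rel22 q a b (inv_ne_zero ha) (inv_ne_zero hb) h
    rwa [mul_inv_cancel₀ ha, mul_inv_cancel₀ hb] at h₁
  · have h₁ := rescale_rel31 q 1 1 ha hb h
    rwa [one_mul, one_mul] at h₁
  · have h₁ := rescale_rel31 q a b (inv_ne_zero ha) (inv_ne_zero hb) h
    rwa [mul_inv_cancel₀ ha, mul_inv_cancel₀ hb] at h₁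
end
end

section
/- The identity assignment on the generators K, K̄, L, L̄, E, F induces a ℂ-algebra isomorphism U_{K,L,norm} ≅ U^{31}_{K,L,norm}, and likewise a ℂ-algebra isomorphism U_{K,L,twist} ≅ U^{31}_{K,L,twist}; equivalently, in the free ℂ-algebra on K, K̄, L, L̄, E, F the two-sided ideal generated by the 22-type relations coincides with the two-sided ideal generated by the corresponding 31-type relations, both in the normal and in the twisted case. -/
/-!
Write `P = K K̄` and `Q = L L̄`.  The Cartan relations make `P` and `Q` complementary idempotents
which act as units on `K, K̄` and `L, L̄` respectively, and `P L = Q K = 0`, etc.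

The 22-type relations give the 31-type ones by multiplying on the right by the appropriate
generator, and by multiplying the `EF` relation by `P` and by `Q`.  Conversely, multiplying
`K E K̄ = q² E P` on the left by `Q` gives `Q E P = 0` and likewise `P E Q = 0`; hence
`K E = K E P = K E K̄ K = q² E K`.  In the twisted case one gets `P E P = Q E Q = 0` instead,
whence `K E = K E Q = K E L̄ L = q² E L`.  Both cases are instances of `mixed_of_sandwich`.
The two `EF` relations of 31-type add up to the one of 22-type since `P + Q = 1`.

All this is carried out for the images of the generators under an arbitrary algebra homomorphism
out of the free algebra: such a homomorphism respects the 22-type relations if and only if it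
respects the 31-type ones, so the two quotients have the same universal property.
-/

noncomputable section

/-- The common "Cartan" relations. -/
inductive relCartan : FA6 → FA6 → Prop
  | kkk : relCartan (XK * XKb * XK) XK
  | kbk : relCartan (XKb * XK * XKb) XKb
  | kc : relCartan (XK * XKb) (XKb * XK)
  | lll : relCartan (XL * XLb * XL) XL
  | lbl : relCartan (XLb * XL * XLb) XLb
  | lc : relCartan (XL * XLb) (XLb * XL)
  | pq : relCartan (XK * XKb + XL * XLb) 1

/-- Relations of `U_{K,L,norm}` (the 22-version). -/
inductive relNorm22 (q : ℂ) : FA6 → FA6 → Prop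
  | cartan {x y : FA6} : relCartan x y → relNorm22 q x y
  | ke : relNorm22 q (XK * XE) (q ^ 2 • (XE * XK))
  | le : relNorm22 q (XL * XE) (q ^ 2 • (XE * XL))
  | kbe : relNorm22 q (XKb * XE) ((q ^ 2)⁻¹ • (XE * XKb))
  | lbe : relNorm22 q (XLb * XE) ((q ^ 2)⁻¹ • (XE * XLb))
  | kf : relNorm22 q (XK * XF) ((q ^ 2)⁻¹ • (XF * XK))
  | lf : relNorm22 q (XL * XF) ((q ^ 2)⁻¹ • (XF * XL))
  | kbf : relNorm22 q (XKb * XF) (q ^ 2 • (XF * XKb))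
  | lbf : relNorm22 q (XLb * XF) (q ^ 2 • (XF * XLb))
  | ef : relNorm22 q (XE * XF - XF * XE)
      ((q - q⁻¹)⁻¹ • ((XK + XL) - (XKb + XLb)))

/-- Relations of `U_{K,L,twist}` (the 22-version). -/
inductive relTwist22 (q : ℂ) : FA6 → FA6 → Prop
  | cartan {x y : FA6} : relCartan x y → relTwist22 q x y
  | ke : relTwist22 q (XK * XE) (q ^ 2 • (XE * XL))
  | le : relTwist22 q (XL * XE) (q ^ 2 • (XE * XK))
  | kbe : relTwist22 q (XKb * XE) ((q ^ 2)⁻¹ • (XE * XLb))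
  | lbe : relTwist22 q (XLb * XE) ((q ^ 2)⁻¹ • (XE * XKb))
  | kf : relTwist22 q (XK * XF) ((q ^ 2)⁻¹ • (XF * XL))
  | lf : relTwist22 q (XL * XF) ((q ^ 2)⁻¹ • (XF * XK))
  | kbf : relTwist22 q (XKb * XF) (q ^ 2 • (XF * XLb))
  | lbf : relTwist22 q (XLb * XF) (q ^ 2 • (XF * XKb))
  | ef : relTwist22 q (XE * XF - XF * XE)
      ((q - q⁻¹)⁻¹ • ((XK + XL) - (XKb + XLb)))

/-- Relations of `U^{31}_{K,L,norm}`. -/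
inductive relNorm31 (q : ℂ) : FA6 → FA6 → Prop
  | cartan {x y : FA6} : relCartan x y → relNorm31 q x y
  | ke : relNorm31 q (XK * XE * XKb) (q ^ 2 • (XE * (XK * XKb)))
  | le : relNorm31 q (XL * XE * XLb) (q ^ 2 • (XE * (XL * XLb)))
  | kbe : relNorm31 q (XKb * XE * XK) ((q ^ 2)⁻¹ • (XE * (XK * XKb)))
  | lbe : relNorm31 q (XLb * XE * XL) ((q ^ 2)⁻¹ • (XE * (XL * XLb)))
  | kf : relNorm31 q (XK * XF * XKb) ((q ^ 2)⁻¹ • (XF * (XK * XKb)))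
  | lf : relNorm31 q (XL * XF * XLb) ((q ^ 2)⁻¹ • (XF * (XL * XLb)))
  | kbf : relNorm31 q (XKb * XF * XK) (q ^ 2 • (XF * (XK * XKb)))
  | lbf : relNorm31 q (XLb * XF * XL) (q ^ 2 • (XF * (XL * XLb)))
  | efk : relNorm31 q (XK * XKb * (XE * XF - XF * XE))
      ((q - q⁻¹)⁻¹ • (XK - XKb))
  | efl : relNorm31 q (XL * XLb * (XE * XF - XF * XE))
      ((q - q⁻¹)⁻¹ • (XL - XLb))

/-- Relations of `U^{31}_{K,L,twist}`. -/
inductive relTwist31 (q : ℂ) : FA6 → FA6 → Prop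
  | cartan {x y : FA6} : relCartan x y → relTwist31 q x y
  | ke : relTwist31 q (XK * XE * XLb) (q ^ 2 • (XE * (XL * XLb)))
  | le : relTwist31 q (XL * XE * XKb) (q ^ 2 • (XE * (XK * XKb)))
  | kbe : relTwist31 q (XKb * XE * XL) ((q ^ 2)⁻¹ • (XE * (XL * XLb)))
  | lbe : relTwist31 q (XLb * XE * XK) ((q ^ 2)⁻¹ • (XE * (XK * XKb)))
  | kf : relTwist31 q (XK * XF * XLb) ((q ^ 2)⁻¹ • (XF * (XL * XLb)))
  | lf : relTwist31 q (XL * XF * XKb) ((q ^ 2)⁻¹ • (XF * (XK * XKb)))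
  | kbf : relTwist31 q (XKb * XF * XL) (q ^ 2 • (XF * (XL * XLb)))
  | lbf : relTwist31 q (XLb * XF * XK) (q ^ 2 • (XF * (XK * XKb)))
  | efk : relTwist31 q (XK * XKb * (XE * XF - XF * XE))
      ((q - q⁻¹)⁻¹ • (XK - XKb))
  | efl : relTwist31 q (XL * XLb * (XE * XF - XF * XE))
      ((q - q⁻¹)⁻¹ • (XL - XLb))

/-- The homomorphism `f` identifies any two elements related by `r`. -/
def Respects {A : Type*} [Ring A] [Algebra ℂ A] (f : FA6 →ₐ[ℂ] A) (r : FA6 → FA6 → Prop) : Prop :=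
  ∀ ⦃x y : FA6⦄, r x y → f x = f y

/-- The Cartan relations for elements `k, k', l, l'` of a ring, playing the roles of
`K, K̄, L, L̄`. -/
structure CartanRel {A : Type*} [Ring A] (k k' l l' : A) : Prop where
  kkk : k * k' * k = k
  kbk : k' * k * k' = k'
  kc : k * k' = k' * k
  lll : l * l' * l = l
  lbl : l' * l * l' = l'
  lc : l * l' = l' * l
  pq : k * k' + l * l' = 1

namespace CartanRel

variable {A : Type*} [Ring A] {k k' l l' : A}

/-- Exchanging `K` with `L`. -/
theorem swap (h : CartanRel k k' l l') : CartanRel l l' k k' :=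
  ⟨h.lll, h.lbl, h.lc, h.kkk, h.kbk, h.kc, by rw [add_comm, h.pq]⟩

/-- Exchanging `K` with `K̄` and `L` with `L̄`. -/
theorem bar (h : CartanRel k k' l l') : CartanRel k' k l' l :=
  ⟨h.kbk, h.kkk, h.kc.symm, h.lbl, h.lll, h.lc.symm, by rw [← h.kc, ← h.lc, h.pq]⟩

theorem q_mul_k (h : CartanRel k k' l l') : l * l' * k = 0 := by
  rw [← sub_eq_of_eq_add' h.pq.symm, sub_mul, h.kkk, one_mul, sub_self]

theorem q_mul_kb (h : CartanRel k k' l l') : l * l' * k' = 0 := by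
  rw [h.lc, h.bar.q_mul_k]

theorem p_mul_kb (h : CartanRel k k' l l') : k * k' * k' = k' := by
  rw [h.kc, h.kbk]

theorem k_mul_p (h : CartanRel k k' l l') : k * (k * k') = k := by
  rw [h.kc, ← mul_assoc, h.kkk]

/-- The 31-type relations `k E m' = c E m m'` and `l E n' = c E n n'` imply the 22-type relation
`k E = c E m`.  The normal case is `(m, n) = (k, l)`, the twisted case is `(m, n) = (l, k)`. -/
theorem mixed_of_sandwich [Algebra ℂ A] {m m' n n' e : A} {c : ℂ} (hc : c ≠ 0)
    (h : CartanRel k k' l l') (h' : CartanRel m m' n n')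
    (h1 : k * e * m' = c • (e * (m * m'))) (h2 : l * e * n' = c • (e * (n * n'))) :
    k * e = c • (e * m) := by
  -- The off-diagonal block of `e` vanishes because `k k' l = 0`.
  have h3 : k * k' * e * (n * n') = 0 := by
    have : c • (k * k' * e * (n * n')) = 0 := by
      rw [mul_assoc, ← mul_smul_comm, ← h2, ← mul_assoc, ← mul_assoc, h.swap.q_mul_k,
        zero_mul, zero_mul]
    exact (smul_eq_zero.mp this).resolve_left hc
  have h4 : k * e * (n * n') = 0 := by
    calc k * e * (n * n') = k * (k * k') * e * (n * n') := by rw [h.k_mul_p]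
      _ = k * (k * k' * e * (n * n')) := by simp only [mul_assoc]
      _ = 0 := by rw [h3, mul_zero]
  calc k * e = k * e * (m * m' + n * n') := by rw [h'.pq, mul_one]
    _ = k * e * m' * m := by rw [mul_add, h4, add_zero, h'.kc, ← mul_assoc]
    _ = c • (e * m) := by rw [h1, smul_mul_assoc, mul_assoc, h'.kkk]

/-- Multiplying the 22-type `EF` relation by `K K̄`. -/
theorem ef_proj [Algebra ℂ A] {x : A} {c : ℂ} (h : CartanRel k k' l l')
    (hx : x = c • ((k + l) - (k' + l'))) : k * k' * x = c • (k - k') := by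
  rw [hx, mul_smul_comm, mul_sub, mul_add, mul_add, h.kkk, h.p_mul_kb, h.swap.q_mul_k,
    h.swap.q_mul_kb, add_zero, add_zero]

/-- Adding the two 31-type `EF` relations. -/
theorem ef_sum [Algebra ℂ A] {x : A} {c : ℂ} (h : CartanRel k k' l l')
    (h1 : k * k' * x = c • (k - k')) (h2 : l * l' * x = c • (l - l')) :
    x = c • ((k + l) - (k' + l')) := by
  calc x = (k * k' + l * l') * x := by rw [h.pq, one_mul]
    _ = c • ((k + l) - (k' + l')) := by
      rw [add_mul, h1, h2, ← smul_add]; congr 1; abel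

end CartanRel

/-- Multiplying a 22-type mixed relation on the right gives the 31-type one. -/
theorem sandwich_of_mixed {A : Type*} [Ring A] [Algebra ℂ A] {k e m : A} {c : ℂ}
    (h : k * e = c • (e * m)) (m' : A) : k * e * m' = c • (e * (m * m')) := by
  rw [h, smul_mul_assoc, mul_assoc]

section Homs

variable {A : Type*} [Ring A] [Algebra ℂ A] (f : FA6 →ₐ[ℂ] A)

theorem cartanRel_of_respects (h : Respects f relCartan) :
    CartanRel (f XK) (f XKb) (f XL) (f XLb) where
  kkk := by simpa using h .kkk
  kbk := by simpa using h .kbk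
  kc := by simpa using h .kc
  lll := by simpa using h .lll
  lbl := by simpa using h .lbl
  lc := by simpa using h .lc
  pq := by simpa using h .pq

theorem respects_norm31_of_22 {q : ℂ} (h : Respects f (relNorm22 q)) :
    Respects f (relNorm31 q) := by
  have hC : Respects f relCartan := fun _ _ hr => h (.cartan hr)
  have C := cartanRel_of_respects f hC
  have hke := h .ke
  have hle := h .le
  have hkbe := h .kbe
  have hlbe := h .lbe
  have hkf := h .kf
  have hlf := h .lf
  have hkbf := h .kbf
  have hlbf := h .lbf
  have hef := h .ef
  simp only [map_mul, map_smul, map_sub, map_add] at hke hle hkbe hlbe hkf hlf hkbf hlbf hef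
  intro x y hr
  cases hr with
  | cartan hr => exact hC hr
  | _ =>
    simp only [map_mul, map_smul, map_sub]
    first
      | exact sandwich_of_mixed (by assumption) _
      | (rw [C.kc]; exact sandwich_of_mixed (by assumption) _)
      | (rw [C.lc]; exact sandwich_of_mixed (by assumption) _)
      | exact C.ef_proj hef
      | exact C.swap.ef_proj (by rw [hef, add_comm (f XL), add_comm (f XLb)])

theorem respects_twist31_of_22 {q : ℂ} (h : Respects f (relTwist22 q)) :
    Respects f (relTwist31 q) := by
  have hC : Respects f relCartan := fun _ _ hr => h (.cartan hr)
  have C := cartanRel_of_respects f hC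
  have hke := h .ke
  have hle := h .le
  have hkbe := h .kbe
  have hlbe := h .lbe
  have hkf := h .kf
  have hlf := h .lf
  have hkbf := h .kbf
  have hlbf := h .lbf
  have hef := h .ef
  simp only [map_mul, map_smul, map_sub, map_add] at hke hle hkbe hlbe hkf hlf hkbf hlbf hef
  intro x y hr
  cases hr with
  | cartan hr => exact hC hr
  | _ =>
    simp only [map_mul, map_smul, map_sub]
    first
      | exact sandwich_of_mixed (by assumption) _
      | (rw [C.kc]; exact sandwich_of_mixed (by assumption) _)
      | (rw [C.lc]; exact sandwich_of_mixed (by assumption) _)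
      | exact C.ef_proj hef
      | exact C.swap.ef_proj (by rw [hef, add_comm (f XL), add_comm (f XLb)])

theorem respects_norm22_of_31 {q : ℂ} (hq : q ≠ 0) (h : Respects f (relNorm31 q)) :
    Respects f (relNorm22 q) := by
  have hC : Respects f relCartan := fun _ _ hr => h (.cartan hr)
  have C := cartanRel_of_respects f hC
  have hq2 : q ^ 2 ≠ 0 := pow_ne_zero 2 hq
  have hq2' : (q ^ 2)⁻¹ ≠ 0 := inv_ne_zero hq2
  have hke := h .ke
  have hle := h .le
  have hkbe := h .kbe
  have hlbe := h .lbe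
  have hkf := h .kf
  have hlf := h .lf
  have hkbf := h .kbf
  have hlbf := h .lbf
  have hefk := h .efk
  have hefl := h .efl
  simp only [map_mul, map_smul, map_sub] at hke hle hkbe hlbe hkf hlf hkbf hlbf hefk hefl
  -- The idempotents are rewritten so that the barred relations match `C.bar`.
  rw [C.kc] at hkbe hkbf
  rw [C.lc] at hlbe hlbf
  intro x y hr
  cases hr with
  | cartan hr => exact hC hr
  | ke => simpa only [map_mul, map_smul] using C.mixed_of_sandwich hq2 C hke hle
  | le => simpa only [map_mul, map_smul] using C.swap.mixed_of_sandwich hq2 C.swap hle hke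
  | kbe => simpa only [map_mul, map_smul] using C.bar.mixed_of_sandwich hq2' C.bar hkbe hlbe
  | lbe =>
    simpa only [map_mul, map_smul] using C.bar.swap.mixed_of_sandwich hq2' C.bar.swap hlbe hkbe
  | kf => simpa only [map_mul, map_smul] using C.mixed_of_sandwich hq2' C hkf hlf
  | lf => simpa only [map_mul, map_smul] using C.swap.mixed_of_sandwich hq2' C.swap hlf hkf
  | kbf => simpa only [map_mul, map_smul] using C.bar.mixed_of_sandwich hq2 C.bar hkbf hlbf
  | lbf =>
    simpa only [map_mul, map_smul] using C.bar.swap.mixed_of_sandwich hq2 C.bar.swap hlbf hkbf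
  | ef => simpa only [map_mul, map_smul, map_sub, map_add] using C.ef_sum hefk hefl

theorem respects_twist22_of_31 {q : ℂ} (hq : q ≠ 0) (h : Respects f (relTwist31 q)) :
    Respects f (relTwist22 q) := by
  have hC : Respects f relCartan := fun _ _ hr => h (.cartan hr)
  have C := cartanRel_of_respects f hC
  have hq2 : q ^ 2 ≠ 0 := pow_ne_zero 2 hq
  have hq2' : (q ^ 2)⁻¹ ≠ 0 := inv_ne_zero hq2
  have hke := h .ke
  have hle := h .le
  have hkbe := h .kbe
  have hlbe := h .lbe
  have hkf := h .kf
  have hlf := h .lf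
  have hkbf := h .kbf
  have hlbf := h .lbf
  have hefk := h .efk
  have hefl := h .efl
  simp only [map_mul, map_smul, map_sub] at hke hle hkbe hlbe hkf hlf hkbf hlbf hefk hefl
  -- The idempotents are rewritten so that the barred relations match `C.bar`.
  rw [C.lc] at hkbe hkbf
  rw [C.kc] at hlbe hlbf
  intro x y hr
  cases hr with
  | cartan hr => exact hC hr
  | ke => simpa only [map_mul, map_smul] using C.mixed_of_sandwich hq2 C.swap hke hle
  | le => simpa only [map_mul, map_smul] using C.swap.mixed_of_sandwich hq2 C hle hke
  | kbe =>
    simpa only [map_mul, map_smul] using C.bar.mixed_of_sandwich hq2' C.bar.swap hkbe hlbe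
  | lbe =>
    simpa only [map_mul, map_smul] using C.bar.swap.mixed_of_sandwich hq2' C.bar hlbe hkbe
  | kf => simpa only [map_mul, map_smul] using C.mixed_of_sandwich hq2' C.swap hkf hlf
  | lf => simpa only [map_mul, map_smul] using C.swap.mixed_of_sandwich hq2' C hlf hkf
  | kbf =>
    simpa only [map_mul, map_smul] using C.bar.mixed_of_sandwich hq2 C.bar.swap hkbf hlbf
  | lbf =>
    simpa only [map_mul, map_smul] using C.bar.swap.mixed_of_sandwich hq2 C.bar hlbf hkbf
  | ef => simpa only [map_mul, map_smul, map_sub, map_add] using C.ef_sum hefk hefl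

end Homs

theorem respects_mkAlgHom (r : FA6 → FA6 → Prop) : Respects (RingQuot.mkAlgHom ℂ r) r :=
  fun _ _ h => RingQuot.mkAlgHom_rel ℂ h

/-- If each quotient map respects the relations of the other quotient, then the identity on
generators induces an isomorphism of the quotients. -/
theorem exists_equiv_of_respects {r s : FA6 → FA6 → Prop}
    (hr : Respects (RingQuot.mkAlgHom ℂ s) r) (hs : Respects (RingQuot.mkAlgHom ℂ r) s) :
    ∃ φ : RingQuot r ≃ₐ[ℂ] RingQuot s,
      ∀ g : G6, φ (RingQuot.mkAlgHom ℂ r (FreeAlgebra.ι ℂ g)) =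
        RingQuot.mkAlgHom ℂ s (FreeAlgebra.ι ℂ g) := by
  have hφ (x : FA6) : RingQuot.liftAlgHom ℂ ⟨RingQuot.mkAlgHom ℂ s, hr⟩ (RingQuot.mkAlgHom ℂ r x) =
      RingQuot.mkAlgHom ℂ s x := RingQuot.liftAlgHom_mkAlgHom_apply ℂ _ hr x
  have hψ (x : FA6) : RingQuot.liftAlgHom ℂ ⟨RingQuot.mkAlgHom ℂ r, hs⟩ (RingQuot.mkAlgHom ℂ s x) =
      RingQuot.mkAlgHom ℂ r x := RingQuot.liftAlgHom_mkAlgHom_apply ℂ _ hs x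
  refine ⟨AlgEquiv.ofAlgHom (RingQuot.liftAlgHom ℂ ⟨RingQuot.mkAlgHom ℂ s, hr⟩)
    (RingQuot.liftAlgHom ℂ ⟨RingQuot.mkAlgHom ℂ r, hs⟩) ?_ ?_, fun g => ?_⟩
  · ext g
    simp [hφ, hψ]
  · ext g
    simp [hφ, hψ]
  · simp [hφ]

/-- The identity assignment on generators induces isomorphisms
`U_{K,L,norm} ≅ U^{31}_{K,L,norm}` and `U_{K,L,twist} ≅ U^{31}_{K,L,twist}`. -/
theorem statement4 (q : ℂ) (hq0 : q ≠ 0) (hq1 : q ≠ 1) (hqm1 : q ≠ -1) :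
    (∃ φ : RingQuot (relNorm22 q) ≃ₐ[ℂ] RingQuot (relNorm31 q),
      ∀ g : G6, φ (RingQuot.mkAlgHom ℂ (relNorm22 q) (FreeAlgebra.ι ℂ g)) =
        RingQuot.mkAlgHom ℂ (relNorm31 q) (FreeAlgebra.ι ℂ g)) ∧
    (∃ φ : RingQuot (relTwist22 q) ≃ₐ[ℂ] RingQuot (relTwist31 q),
      ∀ g : G6, φ (RingQuot.mkAlgHom ℂ (relTwist22 q) (FreeAlgebra.ι ℂ g)) =
        RingQuot.mkAlgHom ℂ (relTwist31 q) (FreeAlgebra.ι ℂ g)) := by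
  exact ⟨exists_equiv_of_respects
      (respects_norm22_of_31 _ hq0 (respects_mkAlgHom _))
      (respects_norm31_of_22 _ (respects_mkAlgHom _)),
    exists_equiv_of_respects
      (respects_twist22_of_31 _ hq0 (respects_mkAlgHom _))
      (respects_twist31_of_22 _ (respects_mkAlgHom _))⟩
end
end

section
/- The assignment k ↦ K + L, k⁻¹ ↦ K̄ + L̄, e ↦ E, f ↦ F extends to a well-defined ℂ-algebra homomorphism Φ : U_q(sl₂) → U_{K,L,norm}, and Φ is injective; in particular U_{K,L,norm} contains U_q(sl₂) as a subalgebra. -/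
/-!
The map `Φ` is well defined because `P = K K̄` and `Q = L L̄` are idempotents with `P + Q = 1`,
hence orthogonal. Since `K = K P`, `K̄ = K̄ P`, `L = Q L` and `L̄ = Q L̄`, all mixed products such
as `K L̄` vanish, and `(K + L)(K̄ + L̄) = P + Q = 1`; the remaining relations are linear in `K + L`.

Injectivity comes from an explicit left inverse `Ψ : U_{K,L,norm} → U_q(sl₂)` sending `K, K̄, E, F`
to `k, k⁻¹, e, f` and `L, L̄` to `0`.
-/


noncomputable section

inductive G4 : Type | k | kb | e | f

abbrev FA4 : Type := FreeAlgebra ℂ G4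

def Yk : FA4 := FreeAlgebra.ι ℂ G4.k
def Ykb : FA4 := FreeAlgebra.ι ℂ G4.kb
def Ye : FA4 := FreeAlgebra.ι ℂ G4.e
def Yf : FA4 := FreeAlgebra.ι ℂ G4.f

/-- Relations of the quantum enveloping algebra `U_q(sl₂)`. -/
inductive relSl2 (q : ℂ) : FA4 → FA4 → Prop
  | kkb : relSl2 q (Yk * Ykb) 1
  | kbk : relSl2 q (Ykb * Yk) 1
  | ke : relSl2 q (Yk * Ye) (q ^ 2 • (Ye * Yk))
  | kf : relSl2 q (Yk * Yf) ((q ^ 2)⁻¹ • (Yf * Yk))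
  | ef : relSl2 q (Ye * Yf - Yf * Ye) ((q - q⁻¹)⁻¹ • (Yk - Ykb))

/-- The quantum enveloping algebra `U_q(sl₂)`. -/
abbrev Uqsl2 (q : ℂ) : Type := RingQuot (relSl2 q)

def sk (q : ℂ) : Uqsl2 q := RingQuot.mkAlgHom ℂ (relSl2 q) Yk
def skb (q : ℂ) : Uqsl2 q := RingQuot.mkAlgHom ℂ (relSl2 q) Ykb
def se (q : ℂ) : Uqsl2 q := RingQuot.mkAlgHom ℂ (relSl2 q) Ye
def sf (q : ℂ) : Uqsl2 q := RingQuot.mkAlgHom ℂ (relSl2 q) Yf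

/-- Relations of `U_{K,L,norm}`. -/
inductive relNorm (q : ℂ) : FA6 → FA6 → Prop
  | kkk : relNorm q (XK * XKb * XK) XK
  | kbk : relNorm q (XKb * XK * XKb) XKb
  | kc : relNorm q (XK * XKb) (XKb * XK)
  | lll : relNorm q (XL * XLb * XL) XL
  | lbl : relNorm q (XLb * XL * XLb) XLb
  | lc : relNorm q (XL * XLb) (XLb * XL)
  | pq : relNorm q (XK * XKb + XL * XLb) 1
  | ke : relNorm q (XK * XE) (q ^ 2 • (XE * XK))
  | le : relNorm q (XL * XE) (q ^ 2 • (XE * XL))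
  | kbe : relNorm q (XKb * XE) ((q ^ 2)⁻¹ • (XE * XKb))
  | lbe : relNorm q (XLb * XE) ((q ^ 2)⁻¹ • (XE * XLb))
  | kf : relNorm q (XK * XF) ((q ^ 2)⁻¹ • (XF * XK))
  | lf : relNorm q (XL * XF) ((q ^ 2)⁻¹ • (XF * XL))
  | kbf : relNorm q (XKb * XF) (q ^ 2 • (XF * XKb))
  | lbf : relNorm q (XLb * XF) (q ^ 2 • (XF * XLb))
  | ef : relNorm q (XE * XF - XF * XE)
      ((q - q⁻¹)⁻¹ • ((XK + XL) - (XKb + XLb)))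

/-- The algebra `U_{K,L,norm}`. -/
abbrev Unorm (q : ℂ) : Type := RingQuot (relNorm q)

def nK (q : ℂ) : Unorm q := RingQuot.mkAlgHom ℂ (relNorm q) XK
def nKb (q : ℂ) : Unorm q := RingQuot.mkAlgHom ℂ (relNorm q) XKb
def nL (q : ℂ) : Unorm q := RingQuot.mkAlgHom ℂ (relNorm q) XL
def nLb (q : ℂ) : Unorm q := RingQuot.mkAlgHom ℂ (relNorm q) XLb
def nE (q : ℂ) : Unorm q := RingQuot.mkAlgHom ℂ (relNorm q) XE
def nF (q : ℂ) : Unorm q := RingQuot.mkAlgHom ℂ (relNorm q) XF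
def nP (q : ℂ) : Unorm q := nK q * nKb q
def nQ (q : ℂ) : Unorm q := nL q * nLb q

/-- If `x, x'` and `y, y'` are pairs of commuting generalized inverses whose idempotents
`x x'` and `y y'` sum to `1`, then all mixed products vanish; this is the one needed below, and
the others follow by exchanging the roles of the variables. -/
lemma mixed_product_eq_zero {A : Type*} [Ring A] {x x' y y' : A}
    (hx : x * x' * x = x) (hxc : x * x' = x' * x)
    (hy : y' * y * y' = y') (hyc : y * y' = y' * y)
    (hs : x * x' + y * y' = 1) : x * y' = 0 := by
  have hxP : x * (x * x') = x := by rw [hxc, ← mul_assoc, hx]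
  have hyQ : (y * y') * y' = y' := by rw [hyc, hy]
  have hP : (x * x') * (x * x') = x * x' := by rw [← mul_assoc, hx]
  have hPQ : (x * x') * (y * y') = 0 := by
    rw [← sub_eq_of_eq_add' hs.symm, mul_sub, mul_one, hP, sub_self]
  calc x * y' = (x * (x * x')) * ((y * y') * y') := by rw [hxP, hyQ]
    _ = x * ((x * x') * (y * y')) * y' := by simp only [mul_assoc]
    _ = 0 := by rw [hPQ, mul_zero, zero_mul]

/-- Conjugating `a z = c z a` by the inverse `b` of `a` gives `b z = c⁻¹ z b`. -/
lemma inv_q_commute {A : Type*} [Ring A] [Algebra ℂ A] {a b z : A} {c : ℂ} (hc : c ≠ 0)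
    (hab : a * b = 1) (hba : b * a = 1) (h : a * z = c • (z * a)) :
    b * z = c⁻¹ • (z * b) := by
  have h1 : z * b = c • (b * z) := by
    calc z * b = b * (a * z) * b := by rw [← mul_assoc b a z, hba, one_mul]
      _ = c • (b * z * (a * b)) := by
        rw [h, mul_smul_comm, smul_mul_assoc]; simp only [mul_assoc]
      _ = c • (b * z) := by rw [hab, mul_one]
  rw [h1, smul_smul, inv_mul_cancel₀ hc, one_smul]

lemma sl2_rel {q : ℂ} {a b : FA4} (h : relSl2 q a b) :
    RingQuot.mkAlgHom ℂ (relSl2 q) a = RingQuot.mkAlgHom ℂ (relSl2 q) b :=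
  RingQuot.mkAlgHom_rel ℂ h

lemma norm_rel {q : ℂ} {a b : FA6} (h : relNorm q a b) :
    RingQuot.mkAlgHom ℂ (relNorm q) a = RingQuot.mkAlgHom ℂ (relNorm q) b :=
  RingQuot.mkAlgHom_rel ℂ h

/-- Images of the generators of `U_q(sl₂)` under `Φ`. -/
def phiGen (q : ℂ) : G4 → Unorm q
  | .k => nK q + nL q
  | .kb => nKb q + nLb q
  | .e => nE q
  | .f => nF q

/-- Images of the generators of `U_{K,L,norm}` under the left inverse `Ψ` of `Φ`. -/
def psiGen (q : ℂ) : G6 → Uqsl2 q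
  | .K => sk q
  | .Kb => skb q
  | .L => 0
  | .Lb => 0
  | .E => se q
  | .F => sf q

lemma phi_rel (q : ℂ) ⦃a b : FA4⦄ (h : relSl2 q a b) :
    FreeAlgebra.lift ℂ (phiGen q) a = FreeAlgebra.lift ℂ (phiGen q) b := by
  have kkk : nK q * nKb q * nK q = nK q := by
    simpa [nK, nKb, nL, nLb, nE, nF] using norm_rel (relNorm.kkk (q := q))
  have kbk : nKb q * nK q * nKb q = nKb q := by
    simpa [nK, nKb, nL, nLb, nE, nF] using norm_rel (relNorm.kbk (q := q))
  have kc : nK q * nKb q = nKb q * nK q := by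
    simpa [nK, nKb, nL, nLb, nE, nF] using norm_rel (relNorm.kc (q := q))
  have lll : nL q * nLb q * nL q = nL q := by
    simpa [nK, nKb, nL, nLb, nE, nF] using norm_rel (relNorm.lll (q := q))
  have lbl : nLb q * nL q * nLb q = nLb q := by
    simpa [nK, nKb, nL, nLb, nE, nF] using norm_rel (relNorm.lbl (q := q))
  have lc : nL q * nLb q = nLb q * nL q := by
    simpa [nK, nKb, nL, nLb, nE, nF] using norm_rel (relNorm.lc (q := q))
  have pq : nK q * nKb q + nL q * nLb q = 1 := by
    simpa [nK, nKb, nL, nLb, nE, nF] using norm_rel (relNorm.pq (q := q))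
  have ke : nK q * nE q = q ^ 2 • (nE q * nK q) := by
    simpa [nK, nKb, nL, nLb, nE, nF] using norm_rel (relNorm.ke (q := q))
  have le : nL q * nE q = q ^ 2 • (nE q * nL q) := by
    simpa [nK, nKb, nL, nLb, nE, nF] using norm_rel (relNorm.le (q := q))
  have kf : nK q * nF q = (q ^ 2)⁻¹ • (nF q * nK q) := by
    simpa [nK, nKb, nL, nLb, nE, nF] using norm_rel (relNorm.kf (q := q))
  have lf : nL q * nF q = (q ^ 2)⁻¹ • (nF q * nL q) := by
    simpa [nK, nKb, nL, nLb, nE, nF] using norm_rel (relNorm.lf (q := q))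
  have ef : nE q * nF q - nF q * nE q
      = (q - q⁻¹)⁻¹ • ((nK q + nL q) - (nKb q + nLb q)) := by
    simpa [nK, nKb, nL, nLb, nE, nF] using norm_rel (relNorm.ef (q := q))
  have pq' : nKb q * nK q + nLb q * nL q = 1 := by rw [← kc, ← lc, pq]
  have z1 : nK q * nLb q = 0 := mixed_product_eq_zero kkk kc lbl lc pq
  have z2 : nL q * nKb q = 0 := mixed_product_eq_zero lll lc kbk kc (by rw [add_comm, pq])
  have z3 : nKb q * nL q = 0 := mixed_product_eq_zero kbk kc.symm lll lc.symm pq'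
  have z4 : nLb q * nK q = 0 :=
    mixed_product_eq_zero lbl lc.symm kkk kc.symm (by rw [add_comm, pq'])
  cases h <;> simp only [Yk, Ykb, Ye, Yf, map_mul, map_sub, map_smul, map_one,
    FreeAlgebra.lift_ι_apply, phiGen]
  · rw [add_mul, mul_add, mul_add, z1, z2, add_zero, zero_add, pq]
  · rw [add_mul, mul_add, mul_add, z3, z4, add_zero, zero_add, pq']
  · rw [add_mul, mul_add, smul_add, ke, le]
  · rw [add_mul, mul_add, smul_add, kf, lf]
  · exact ef

lemma psi_rel {q : ℂ} (hq0 : q ≠ 0) ⦃a b : FA6⦄ (h : relNorm q a b) :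
    FreeAlgebra.lift ℂ (psiGen q) a = FreeAlgebra.lift ℂ (psiGen q) b := by
  have kkb : sk q * skb q = 1 := by
    simpa [sk, skb, se, sf] using sl2_rel (relSl2.kkb (q := q))
  have kbk : skb q * sk q = 1 := by
    simpa [sk, skb, se, sf] using sl2_rel (relSl2.kbk (q := q))
  have ke : sk q * se q = q ^ 2 • (se q * sk q) := by
    simpa [sk, skb, se, sf] using sl2_rel (relSl2.ke (q := q))
  have kf : sk q * sf q = (q ^ 2)⁻¹ • (sf q * sk q) := by
    simpa [sk, skb, se, sf] using sl2_rel (relSl2.kf (q := q))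
  have ef : se q * sf q - sf q * se q = (q - q⁻¹)⁻¹ • (sk q - skb q) := by
    simpa [sk, skb, se, sf] using sl2_rel (relSl2.ef (q := q))
  have hq2 : q ^ 2 ≠ 0 := pow_ne_zero 2 hq0
  have kbe := inv_q_commute hq2 kkb kbk ke
  have kbf := inv_q_commute (inv_ne_zero hq2) kkb kbk kf
  rw [inv_inv] at kbf
  cases h <;> simp only [XK, XKb, XL, XLb, XE, XF, map_mul, map_add, map_sub, map_smul, map_one,
    FreeAlgebra.lift_ι_apply, psiGen, kkb, kbk, one_mul, mul_zero, zero_mul, add_zero, smul_zero]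
  all_goals assumption

/-- The assignment `k ↦ K + L`, `k⁻¹ ↦ K̄ + L̄`, `e ↦ E`, `f ↦ F` extends to a
well-defined algebra homomorphism `Φ : U_q(sl₂) → U_{K,L,norm}`, and `Φ` is injective. -/
theorem statement5 (q : ℂ) (hq0 : q ≠ 0) (hq1 : q ≠ 1) (hqm1 : q ≠ -1) :
    ∃ Φ : Uqsl2 q →ₐ[ℂ] Unorm q,
      Φ (sk q) = nK q + nL q ∧ Φ (skb q) = nKb q + nLb q ∧
      Φ (se q) = nE q ∧ Φ (sf q) = nF q ∧
      Function.Injective Φ := by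
  let Φ : Uqsl2 q →ₐ[ℂ] Unorm q := RingQuot.liftAlgHom ℂ ⟨_, phi_rel q⟩
  let Ψ : Unorm q →ₐ[ℂ] Uqsl2 q := RingQuot.liftAlgHom ℂ ⟨_, psi_rel hq0⟩
  have hk : Φ (sk q) = nK q + nL q := by
    simp [Φ, sk, Yk, phiGen]
  have hkb : Φ (skb q) = nKb q + nLb q := by
    simp [Φ, skb, Ykb, phiGen]
  have he : Φ (se q) = nE q := by
    simp [Φ, se, Ye, phiGen]
  have hf : Φ (sf q) = nF q := by
    simp [Φ, sf, Yf, phiGen]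
  have hΨΦ : Ψ.comp Φ = AlgHom.id ℂ (Uqsl2 q) := by
    apply RingQuot.ringQuot_ext'
    apply FreeAlgebra.hom_ext
    funext g
    cases g
    · change Ψ (Φ (sk q)) = sk q
      rw [hk]; simp [Ψ, nK, nL, XK, XL, psiGen]
    · change Ψ (Φ (skb q)) = skb q
      rw [hkb]; simp [Ψ, nKb, nLb, XKb, XLb, psiGen]
    · change Ψ (Φ (se q)) = se q
      rw [he]; simp [Ψ, nE, XE, psiGen]
    · change Ψ (Φ (sf q)) = sf q
      rw [hf]; simp [Ψ, nF, XF, psiGen]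
  exact ⟨Φ, hk, hkb, he, hf,
    Function.LeftInverse.injective (g := Ψ) fun x => DFunLike.congr_fun hΨΦ x⟩
end
end

section
/- There is a ℂ-algebra isomorphism φ : U_{K,L,norm} → U_q(sl₂) × U_q(sl₂) determined by φ(K) = (k, 0), φ(K̄) = (k⁻¹, 0), φ(L) = (0, k), φ(L̄) = (0, k⁻¹), φ(E) = (e, e), φ(F) = (f, f); in particular U_{K,L,norm} is the direct sum of the two ideals P·U_{K,L,norm} and Q·U_{K,L,norm}, each of which is isomorphic to U_q(sl₂) as a ℂ-algebra. -/
/-!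
The elements `P = K K̄` and `Q = L L̄` are complementary orthogonal central idempotents of
`U_{K,L,norm}`: from `P K = K = K P` and `P + Q = 1` one gets `K Q = Q K = 0`, hence
`K L = L K = 0` and similarly for `K̄`, `L̄`, while `P` commutes with `E` and `F` because the powers
of `q` cancel.  Consequently `k ↦ K + L`, `k⁻¹ ↦ K̄ + L̄`, `e ↦ E`, `f ↦ F` defines a unital
algebra map `ψ = ofSl2 : U_q(sl₂) → U_{K,L,norm}`, and the inverse of `φ = toProd` is
`(a, b) ↦ P ψ(a) + Q ψ(b)` (`ofProd`).  This is multiplicative because `P` is a central idempotent,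
and both composites are the identity because they are so on generators.
-/


noncomputable section

/-! ### Defining relations in the quotients -/

section Relations

variable (q : ℂ)

lemma sk_mul_skb : sk q * skb q = 1 := by
  simpa [sk, skb] using RingQuot.mkAlgHom_rel ℂ (relSl2.kkb (q := q))

lemma skb_mul_sk : skb q * sk q = 1 := by
  simpa [sk, skb] using RingQuot.mkAlgHom_rel ℂ (relSl2.kbk (q := q))

lemma sk_mul_se : sk q * se q = q ^ 2 • (se q * sk q) := by
  simpa [sk, se] using RingQuot.mkAlgHom_rel ℂ (relSl2.ke (q := q))

lemma sk_mul_sf : sk q * sf q = (q ^ 2)⁻¹ • (sf q * sk q) := by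
  simpa [sk, sf] using RingQuot.mkAlgHom_rel ℂ (relSl2.kf (q := q))

lemma se_sf : se q * sf q - sf q * se q = (q - q⁻¹)⁻¹ • (sk q - skb q) := by
  simpa [sk, skb, se, sf] using RingQuot.mkAlgHom_rel ℂ (relSl2.ef (q := q))

lemma nK_nKb_nK : nK q * nKb q * nK q = nK q := by
  simpa [nK, nKb] using RingQuot.mkAlgHom_rel ℂ (relNorm.kkk (q := q))

lemma nKb_nK_nKb : nKb q * nK q * nKb q = nKb q := by
  simpa [nK, nKb] using RingQuot.mkAlgHom_rel ℂ (relNorm.kbk (q := q))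

lemma nK_nKb : nK q * nKb q = nKb q * nK q := by
  simpa [nK, nKb] using RingQuot.mkAlgHom_rel ℂ (relNorm.kc (q := q))

lemma nL_nLb_nL : nL q * nLb q * nL q = nL q := by
  simpa [nL, nLb] using RingQuot.mkAlgHom_rel ℂ (relNorm.lll (q := q))

lemma nLb_nL_nLb : nLb q * nL q * nLb q = nLb q := by
  simpa [nL, nLb] using RingQuot.mkAlgHom_rel ℂ (relNorm.lbl (q := q))

lemma nL_nLb : nL q * nLb q = nLb q * nL q := by
  simpa [nL, nLb] using RingQuot.mkAlgHom_rel ℂ (relNorm.lc (q := q))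

lemma nP_add_nQ : nP q + nQ q = 1 := by
  simpa [nP, nQ, nK, nKb, nL, nLb] using RingQuot.mkAlgHom_rel ℂ (relNorm.pq (q := q))

lemma nK_nE : nK q * nE q = q ^ 2 • (nE q * nK q) := by
  simpa [nK, nE] using RingQuot.mkAlgHom_rel ℂ (relNorm.ke (q := q))

lemma nL_nE : nL q * nE q = q ^ 2 • (nE q * nL q) := by
  simpa [nL, nE] using RingQuot.mkAlgHom_rel ℂ (relNorm.le (q := q))

lemma nKb_nE : nKb q * nE q = (q ^ 2)⁻¹ • (nE q * nKb q) := by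
  simpa [nKb, nE] using RingQuot.mkAlgHom_rel ℂ (relNorm.kbe (q := q))

lemma nK_nF : nK q * nF q = (q ^ 2)⁻¹ • (nF q * nK q) := by
  simpa [nK, nF] using RingQuot.mkAlgHom_rel ℂ (relNorm.kf (q := q))

lemma nL_nF : nL q * nF q = (q ^ 2)⁻¹ • (nF q * nL q) := by
  simpa [nL, nF] using RingQuot.mkAlgHom_rel ℂ (relNorm.lf (q := q))

lemma nKb_nF : nKb q * nF q = q ^ 2 • (nF q * nKb q) := by
  simpa [nKb, nF] using RingQuot.mkAlgHom_rel ℂ (relNorm.kbf (q := q))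

lemma nE_nF : nE q * nF q - nF q * nE q =
    (q - q⁻¹)⁻¹ • ((nK q + nL q) - (nKb q + nLb q)) := by
  simpa [nK, nKb, nL, nLb, nE, nF] using RingQuot.mkAlgHom_rel ℂ (relNorm.ef (q := q))

/-- Conjugating a `q`-commutation relation by the inverse of `k`. -/
lemma inv_qcomm {A : Type*} [Ring A] [Algebra ℂ A] {k kb x : A} {c : ℂ} (hc : c ≠ 0)
    (h1 : k * kb = 1) (h2 : kb * k = 1) (h : k * x = c • (x * k)) :
    kb * x = c⁻¹ • (x * kb) := by
  have h3 : kb * (k * x) * kb = kb * (c • (x * k)) * kb := by rw [h]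
  have h4 : x * kb = c • (kb * x) := by
    calc x * kb = (kb * k) * x * kb := by rw [h2, one_mul]
      _ = kb * (c • (x * k)) * kb := by rw [← h3]; noncomm_ring
      _ = c • (kb * x * (k * kb)) := by simp [mul_assoc]
      _ = c • (kb * x) := by rw [h1, mul_one]
  rw [h4, smul_smul, inv_mul_cancel₀ hc, one_smul]

end Relations

/-! ### The central idempotents P and Q -/

section Idempotents

variable (q : ℂ)

lemma nP_mul_nK : nP q * nK q = nK q := nK_nKb_nK q

lemma nK_mul_nP : nK q * nP q = nK q := by
  rw [nP, nK_nKb, ← mul_assoc, nK_nKb_nK]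

lemma nP_mul_nKb : nP q * nKb q = nKb q := by
  rw [nP, nK_nKb, nKb_nK_nKb]

lemma nKb_mul_nP : nKb q * nP q = nKb q := by
  rw [nP, ← mul_assoc, nKb_nK_nKb]

lemma nQ_mul_nL : nQ q * nL q = nL q := nL_nLb_nL q

lemma nL_mul_nQ : nL q * nQ q = nL q := by
  rw [nQ, nL_nLb, ← mul_assoc, nL_nLb_nL]

lemma nQ_mul_nLb : nQ q * nLb q = nLb q := by
  rw [nQ, nL_nLb, nLb_nL_nLb]

lemma nLb_mul_nQ : nLb q * nQ q = nLb q := by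
  rw [nQ, ← mul_assoc, nLb_nL_nLb]

lemma nQ_eq : nQ q = 1 - nP q := eq_sub_of_add_eq' (nP_add_nQ q)

lemma nP_mul_nP : nP q * nP q = nP q := by
  conv_lhs => rw [nP, ← mul_assoc, nK_nKb_nK]
  rw [nP]

lemma nP_mul_nL : nP q * nL q = 0 := by
  have h := nQ_mul_nL q
  rwa [nQ_eq, sub_mul, one_mul, sub_eq_self] at h

lemma nL_mul_nP : nL q * nP q = 0 := by
  have h := nL_mul_nQ q
  rwa [nQ_eq, mul_sub, mul_one, sub_eq_self] at h

lemma nP_mul_nLb : nP q * nLb q = 0 := by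
  have h := nQ_mul_nLb q
  rwa [nQ_eq, sub_mul, one_mul, sub_eq_self] at h

lemma nLb_mul_nP : nLb q * nP q = 0 := by
  have h := nLb_mul_nQ q
  rwa [nQ_eq, mul_sub, mul_one, sub_eq_self] at h

lemma nK_mul_nLb : nK q * nLb q = 0 := by
  rw [← nK_mul_nP, mul_assoc, nP_mul_nLb, mul_zero]

lemma nL_mul_nKb : nL q * nKb q = 0 := by
  rw [← nP_mul_nKb, ← mul_assoc, nL_mul_nP, zero_mul]

lemma nKb_mul_nL : nKb q * nL q = 0 := by
  rw [← nKb_mul_nP, mul_assoc, nP_mul_nL, mul_zero]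

lemma nLb_mul_nK : nLb q * nK q = 0 := by
  rw [← nP_mul_nK, ← mul_assoc, nLb_mul_nP, zero_mul]

lemma nP_commute_nE (hq : q ≠ 0) : nP q * nE q = nE q * nP q := by
  rw [nP, mul_assoc, nKb_nE, mul_smul_comm, ← mul_assoc, nK_nE, smul_mul_assoc, smul_smul,
    inv_mul_cancel₀ (pow_ne_zero 2 hq), one_smul, mul_assoc]

lemma nP_commute_nF (hq : q ≠ 0) : nP q * nF q = nF q * nP q := by
  rw [nP, mul_assoc, nKb_nF, mul_smul_comm, ← mul_assoc, nK_nF, smul_mul_assoc, smul_smul,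
    mul_inv_cancel₀ (pow_ne_zero 2 hq), one_smul, mul_assoc]

lemma nP_central (hq : q ≠ 0) (x : Unorm q) : nP q * x = x * nP q := by
  obtain ⟨y, rfl⟩ := RingQuot.mkAlgHom_surjective ℂ (relNorm q) x
  induction y using FreeAlgebra.induction with
  | grade0 r => rw [AlgHom.commutes]; exact (Algebra.commutes r _).symm
  | grade1 g =>
    cases g
    · exact (nP_mul_nK q).trans (nK_mul_nP q).symm
    · exact (nP_mul_nKb q).trans (nKb_mul_nP q).symm
    · exact (nP_mul_nL q).trans (nL_mul_nP q).symm
    · exact (nP_mul_nLb q).trans (nLb_mul_nP q).symm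
    · exact nP_commute_nE q hq
    · exact nP_commute_nF q hq
  | mul a b ha hb => rw [map_mul, ← mul_assoc, ha, mul_assoc, hb, mul_assoc]
  | add a b ha hb => rw [map_add, mul_add, add_mul, ha, hb]

end Idempotents

/-! ### The homomorphism φ and its inverse -/

section Maps

variable (q : ℂ)

/-- The values of `φ` on the generators of `U_{K,L,norm}`. -/
def toProdGen : G6 → Uqsl2 q × Uqsl2 q
  | .K => (sk q, 0)
  | .Kb => (skb q, 0)
  | .L => (0, sk q)
  | .Lb => (0, skb q)
  | .E => (se q, se q)
  | .F => (sf q, sf q)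

lemma toProdGen_rel (hq : q ≠ 0) ⦃x y : FA6⦄ (h : relNorm q x y) :
    FreeAlgebra.lift ℂ (toProdGen q) x = FreeAlgebra.lift ℂ (toProdGen q) y := by
  have hq2 : q ^ 2 ≠ 0 := pow_ne_zero 2 hq
  have hbe := inv_qcomm hq2 (sk_mul_skb q) (skb_mul_sk q) (sk_mul_se q)
  have hbf := inv_qcomm (inv_ne_zero hq2) (sk_mul_skb q) (skb_mul_sk q) (sk_mul_sf q)
  rw [inv_inv] at hbf
  cases h <;>
    simp [XK, XKb, XL, XLb, XE, XF, toProdGen, sk_mul_skb, skb_mul_sk, sk_mul_se, sk_mul_sf,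
      hbe, hbf, se_sf, Prod.ext_iff]

/-- The homomorphism `φ : U_{K,L,norm} → U_q(sl₂) × U_q(sl₂)`. -/
def toProd (hq : q ≠ 0) : Unorm q →ₐ[ℂ] Uqsl2 q × Uqsl2 q :=
  RingQuot.liftAlgHom ℂ ⟨FreeAlgebra.lift ℂ (toProdGen q), toProdGen_rel q hq⟩

lemma toProd_mk (hq : q ≠ 0) (g : G6) :
    toProd q hq (RingQuot.mkAlgHom ℂ (relNorm q) (FreeAlgebra.ι ℂ g)) = toProdGen q g := by
  simp [toProd]

/-- The values of `ψ` on the generators of `U_q(sl₂)`. -/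
def ofSl2Gen : G4 → Unorm q
  | .k => nK q + nL q
  | .kb => nKb q + nLb q
  | .e => nE q
  | .f => nF q

lemma ofSl2Gen_rel ⦃x y : FA4⦄ (h : relSl2 q x y) :
    FreeAlgebra.lift ℂ (ofSl2Gen q) x = FreeAlgebra.lift ℂ (ofSl2Gen q) y := by
  have h1 : nK q * nKb q + nL q * nLb q = 1 := nP_add_nQ q
  have h2 : nKb q * nK q + nLb q * nL q = 1 := by rw [← nK_nKb, ← nL_nLb, h1]
  cases h
  · simp [Yk, Ykb, ofSl2Gen, add_mul, mul_add, nK_mul_nLb, nL_mul_nKb, h1]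
  · simp [Yk, Ykb, ofSl2Gen, add_mul, mul_add, nKb_mul_nL, nLb_mul_nK, h2]
  · simp [Yk, Ye, ofSl2Gen, add_mul, mul_add, nK_nE, nL_nE]
  · simp [Yk, Yf, ofSl2Gen, add_mul, mul_add, nK_nF, nL_nF]
  · simpa [Yk, Ykb, Ye, Yf, ofSl2Gen] using nE_nF q

/-- The diagonal copy `ψ : U_q(sl₂) → U_{K,L,norm}` of `U_q(sl₂)`. -/
def ofSl2 : Uqsl2 q →ₐ[ℂ] Unorm q :=
  RingQuot.liftAlgHom ℂ ⟨FreeAlgebra.lift ℂ (ofSl2Gen q), ofSl2Gen_rel q⟩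

lemma ofSl2_mk (g : G4) :
    ofSl2 q (RingQuot.mkAlgHom ℂ (relSl2 q) (FreeAlgebra.ι ℂ g)) = ofSl2Gen q g := by
  simp [ofSl2]

/-- The inverse `(a, b) ↦ P ψ(a) + Q ψ(b)` of `φ`, with `Q` written as `1 - P`. -/
def ofProd (hq : q ≠ 0) : Uqsl2 q × Uqsl2 q →ₐ[ℂ] Unorm q :=
  AlgHom.ofLinearMap
    (LinearMap.mulLeft ℂ (nP q) ∘ₗ (ofSl2 q).toLinearMap ∘ₗ LinearMap.fst ℂ _ _ +
      LinearMap.mulLeft ℂ (1 - nP q) ∘ₗ (ofSl2 q).toLinearMap ∘ₗ LinearMap.snd ℂ _ _)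
    (by simp)
    (by
      rintro ⟨a, b⟩ ⟨c, d⟩
      have hP := nP_mul_nP q
      have hPQ : nP q * (1 - nP q) = 0 := by rw [mul_sub, hP, mul_one, sub_self]
      have hQP : (1 - nP q) * nP q = 0 := by rw [sub_mul, hP, one_mul, sub_self]
      have hQ : (1 - nP q) * (1 - nP q) = 1 - nP q := by rw [mul_sub, hQP, mul_one, sub_zero]
      have hQc (x : Unorm q) : (1 - nP q) * x = x * (1 - nP q) := by
        rw [sub_mul, mul_sub, one_mul, mul_one, nP_central q hq]
      have key (u v x y : Unorm q) (hv : v * x = x * v) : u * x * (v * y) = u * v * (x * y) := by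
        rw [mul_assoc, ← mul_assoc x, ← hv]; simp only [mul_assoc]
      simp only [Prod.mk_mul_mk, LinearMap.add_apply, LinearMap.comp_apply, LinearMap.fst_apply,
        LinearMap.snd_apply, LinearMap.mulLeft_apply, AlgHom.toLinearMap_apply, map_mul]
      rw [add_mul, mul_add, mul_add, key _ _ _ _ (nP_central q hq _), key _ _ _ _ (hQc _),
        key _ _ _ _ (nP_central q hq _), key _ _ _ _ (hQc _), hP, hPQ, hQP, hQ]
      simp)

lemma ofProd_apply (hq : q ≠ 0) (a b : Uqsl2 q) :
    ofProd q hq (a, b) = nP q * ofSl2 q a + (1 - nP q) * ofSl2 q b := rfl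

/-- `φ ∘ ψ` is the diagonal embedding. -/
lemma toProd_ofSl2 (hq : q ≠ 0) (a : Uqsl2 q) : toProd q hq (ofSl2 q a) = (a, a) := by
  have h : (toProd q hq).comp (ofSl2 q) = (AlgHom.id ℂ _).prod (AlgHom.id ℂ _) := by
    apply RingQuot.ringQuot_ext'
    apply FreeAlgebra.hom_ext
    funext g
    change toProd q hq (ofSl2 q (RingQuot.mkAlgHom ℂ (relSl2 q) (FreeAlgebra.ι ℂ g))) =
      (RingQuot.mkAlgHom ℂ (relSl2 q) (FreeAlgebra.ι ℂ g),
        RingQuot.mkAlgHom ℂ (relSl2 q) (FreeAlgebra.ι ℂ g))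
    rw [ofSl2_mk]
    cases g
    · exact (map_add _ _ _).trans <| (congrArg₂ _ (toProd_mk q hq .K) (toProd_mk q hq .L)).trans
        (by simp [toProdGen, sk, Yk])
    · exact (map_add _ _ _).trans <| (congrArg₂ _ (toProd_mk q hq .Kb) (toProd_mk q hq .Lb)).trans
        (by simp [toProdGen, skb, Ykb])
    · exact toProd_mk q hq .E
    · exact toProd_mk q hq .F
  exact DFunLike.congr_fun h a

lemma toProd_nP (hq : q ≠ 0) : toProd q hq (nP q) = (1, 0) := by
  rw [nP, map_mul]
  exact (congrArg₂ _ (toProd_mk q hq .K) (toProd_mk q hq .Kb)).trans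
    (by simp [toProdGen, sk_mul_skb])

lemma toProd_ofProd (hq : q ≠ 0) (x : Uqsl2 q × Uqsl2 q) : toProd q hq (ofProd q hq x) = x := by
  obtain ⟨a, b⟩ := x
  rw [ofProd_apply, map_add, map_mul, map_mul, map_sub, map_one, toProd_nP, toProd_ofSl2,
    toProd_ofSl2]
  simp [Prod.ext_iff]

lemma ofProd_toProd (hq : q ≠ 0) : (ofProd q hq).comp (toProd q hq) = AlgHom.id ℂ _ := by
  have hk : ofSl2 q (sk q) = nK q + nL q := ofSl2_mk q .k
  have hkb : ofSl2 q (skb q) = nKb q + nLb q := ofSl2_mk q .kb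
  have he : ofSl2 q (se q) = nE q := ofSl2_mk q .e
  have hf : ofSl2 q (sf q) = nF q := ofSl2_mk q .f
  apply RingQuot.ringQuot_ext'
  apply FreeAlgebra.hom_ext
  funext g
  change ofProd q hq (toProd q hq (RingQuot.mkAlgHom ℂ (relNorm q) (FreeAlgebra.ι ℂ g))) =
    RingQuot.mkAlgHom ℂ (relNorm q) (FreeAlgebra.ι ℂ g)
  rw [toProd_mk]
  cases g <;> rw [toProdGen, ofProd_apply]
  · change _ = nK q
    simp [hk, mul_add, nP_mul_nK, nP_mul_nL]
  · change _ = nKb q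
    simp [hkb, mul_add, nP_mul_nKb, nP_mul_nLb]
  · change _ = nL q
    simp [hk, mul_add, sub_mul, nP_mul_nK, nP_mul_nL]
  · change _ = nLb q
    simp [hkb, mul_add, sub_mul, nP_mul_nKb, nP_mul_nLb]
  · change _ = nE q
    simp [he, sub_mul]
  · change _ = nF q
    simp [hf, sub_mul]

end Maps

/-- There is an algebra isomorphism `φ : U_{K,L,norm} ≃ U_q(sl₂) × U_q(sl₂)`
determined by `φ(K) = (k, 0)`, `φ(K̄) = (k⁻¹, 0)`, `φ(L) = (0, k)`, `φ(L̄) = (0, k⁻¹)`,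
`φ(E) = (e, e)`, `φ(F) = (f, f)`. -/
theorem statement7 (q : ℂ) (hq0 : q ≠ 0) (hq1 : q ≠ 1) (hqm1 : q ≠ -1) :
    ∃ φ : Unorm q ≃ₐ[ℂ] (Uqsl2 q × Uqsl2 q),
      φ (nK q) = (sk q, 0) ∧ φ (nKb q) = (skb q, 0) ∧
      φ (nL q) = (0, sk q) ∧ φ (nLb q) = (0, skb q) ∧
      φ (nE q) = (se q, se q) ∧ φ (nF q) = (sf q, sf q) := by
  exact ⟨AlgEquiv.ofAlgHom (toProd q hq0) (ofProd q hq0)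
      (AlgHom.ext (toProd_ofProd q hq0)) (ofProd_toProd q hq0),
    toProd_mk q hq0 .K, toProd_mk q hq0 .Kb, toProd_mk q hq0 .L, toProd_mk q hq0 .Lb,
    toProd_mk q hq0 .E, toProd_mk q hq0 .F⟩
end
end
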